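/- Let A ∈ ℝ^{d×d}, B ∈ ℝ^{d×m}, C ∈ ℝ^{k×d}, σ ∈ ℝ^{d×n}, and let R ∈ ℝ^{m×m} be symmetric positive definite. Let S : [0,T] → ℝ^{d×d} be a continuously differentiable symmetric-positive-definite-matrix-valued function satisfying (d/dt)S_t = A S_t + S_t Aᵀ + S_t CᵀC S_t − B R⁻¹ Bᵀ. Let ρ(t,z) := (2π)^{−d/2} (det S_t)^{−1/2} exp(−½ zᵀ S_t⁻¹ z) be the density of N(0, S_t). Then for all t ∈ [0,T] and z ∈ ℝ^d, ∂ρ/∂t (t,z) = −∇_z·( ρ(t,·) ( A(·) + ½ S_t CᵀC (·) + ½ σσᵀ S_t⁻¹ (·) ) )(z) − ½ tr( (B R⁻¹ Bᵀ + σσᵀ) ∇_z²ρ(t,z) ), where A(·), ½S_tCᵀC(·), ½σσᵀS_t⁻¹(·) denote the linear vector fields z ↦ Az, z ↦ ½S_tCᵀCz, z ↦ ½σσᵀS_t⁻¹z. -/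

import Mathlib

open Matrix

/-- Partial derivative in direction `i`. -/
noncomputable def pd {d : ℕ} (i : Fin d) (f : (Fin d → ℝ) → ℝ) (x : Fin d → ℝ) : ℝ :=
  fderiv ℝ f x (Pi.single i 1)

/-- Spatial gradient. -/
noncomputable def grad {d : ℕ} (f : (Fin d → ℝ) → ℝ) (x : Fin d → ℝ) : Fin d → ℝ :=
  fun i => pd i f x

/-- Spatial Hessian as a matrix. -/
noncomputable def hess {d : ℕ} (f : (Fin d → ℝ) → ℝ) (x : Fin d → ℝ) :
    Matrix (Fin d) (Fin d) ℝ :=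
  Matrix.of fun i j => pd i (fun y => pd j f y) x

/-- Divergence of a vector field. -/
noncomputable def dvg {d : ℕ} (v : (Fin d → ℝ) → (Fin d → ℝ)) (x : Fin d → ℝ) : ℝ :=
  ∑ i, pd i (fun y => v y i) x

/-!
Write `ρ_S` for the density of `N(0, S)` and `H` for its spatial Hessian. Both sides of the equation
are traces against `H`. Along a differentiable path of covariances, `ρ_S` satisfies the heat
equation `∂ₜρ = ½ tr(S' H)`. Since `∇ρ_S = -ρ_S S⁻¹z`, a linear field `L` has flux
`ρ_S Lz = -L S ∇ρ_S`, whence `∇·(ρ_S Lz) = -tr(L S H)`. As `H` is symmetric,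
`2 tr(A S H) = tr((A S + S Aᵀ) H)`, so the dual Riccati equation turns the heat equation into the
Fokker-Planck equation; the correction term of the drift contributes `½ tr(σσᵀ H)`, which cancels
the additional diffusion.
-/

section MatrixCalculus

variable {𝕜 m n ι : Type*} [NontriviallyNormedField 𝕜] {t : 𝕜}

theorem hasDerivAt_matrix [Finite m] [Finite n] {M : 𝕜 → Matrix m n 𝕜} {M' : Matrix m n 𝕜} :
    HasDerivAt M M' t ↔ ∀ i j, HasDerivAt (fun s => M s i j) (M' i j) t := by
  have := Fintype.ofFinite m
  have := Fintype.ofFinite n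
  exact (hasDerivAt_pi (φ := M)).trans <| forall_congr' fun _ => hasDerivAt_pi

theorem hasDerivAt_dotProduct_mulVec [Fintype m] [Fintype n] {M : 𝕜 → Matrix m n 𝕜}
    {M' : Matrix m n 𝕜} (hM : HasDerivAt M M' t) (x : m → 𝕜) (y : n → 𝕜) :
    HasDerivAt (fun s => x ⬝ᵥ M s *ᵥ y) (x ⬝ᵥ M' *ᵥ y) t :=
  .fun_sum fun i _ => .const_mul _ <| .fun_sum fun j _ => (hasDerivAt_matrix.1 hM i j).mul_const _

theorem hasFDerivAt_mulVec_apply [CompleteSpace 𝕜] [Fintype n] (L : Matrix m n 𝕜) (j : m)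
    (z : n → 𝕜) :
    HasFDerivAt (fun y => (L *ᵥ y) j) (dotProductBilin 𝕜 𝕜 (L.row j)).toContinuousLinearMap z :=
  (dotProductBilin 𝕜 𝕜 (L.row j)).toContinuousLinearMap.hasFDerivAt

theorem hasFDerivAt_dotProduct_mulVec_self [CompleteSpace 𝕜] [Fintype n] (P : Matrix n n 𝕜)
    (z : n → 𝕜) :
    HasFDerivAt (fun y => y ⬝ᵥ P *ᵥ y)
      (dotProductBilin 𝕜 𝕜 ((P + Pᵀ) *ᵥ z)).toContinuousLinearMap z := by
  refine (HasFDerivAt.fun_sum fun i _ =>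
    (hasFDerivAt_apply i z).mul (hasFDerivAt_mulVec_apply P i z)).congr_fderiv ?_
  ext v
  have hadjoint : Pᵀ *ᵥ z ⬝ᵥ v = z ⬝ᵥ P *ᵥ v := by
    rw [dotProduct_comm, dotProduct_transpose_mulVec]
  have hsum : ∑ i, (z i * P.row i ⬝ᵥ v + (P *ᵥ z) i * v i) = (P + Pᵀ) *ᵥ z ⬝ᵥ v := by
    rw [add_mulVec, add_dotProduct, hadjoint, Finset.sum_add_distrib, add_comm]
    rfl
  simpa using hsum

variable [Fintype ι] [DecidableEq ι]

open scoped Matrix.Norms.Operator in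
theorem hasDerivAt_matrix_inv [CompleteSpace 𝕜] {M : 𝕜 → Matrix ι ι 𝕜} {M' : Matrix ι ι 𝕜}
    (hM : HasDerivAt M M' t) (ht : IsUnit (M t)) :
    HasDerivAt (fun s => (M s)⁻¹) (-((M t)⁻¹ * M' * (M t)⁻¹)) t := by
  -- The uniformity is the one of the operator norm, not the entrywise instance on matrices.
  have : @CompleteSpace (Matrix ι ι 𝕜) PseudoMetricSpace.toUniformSpace :=
    FiniteDimensional.complete 𝕜 _
  obtain ⟨u, hu⟩ := ht
  have hinv := hasFDerivAt_ringInverse (𝕜 := 𝕜) u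
  rw [hu] at hinv
  simp only [nonsing_inv_eq_ringInverse]
  refine (hinv.comp_hasDerivAt t hM).congr_deriv ?_
  simp [← hu]

theorem hasDerivAt_det {M : 𝕜 → Matrix ι ι 𝕜} {M' : Matrix ι ι 𝕜} (hM : HasDerivAt M M' t) :
    HasDerivAt (fun s => (M s).det) ((M t).adjugate * M').trace t := by
  let det' : ContinuousMultilinearMap 𝕜 (fun _ : ι => ι → 𝕜) 𝕜 :=
    { toMultilinearMap := (detRowAlternating : (ι → 𝕜) [⋀^ι]→ₗ[𝕜] 𝕜).toMultilinearMap
      cont := continuous_id.matrix_det (R := 𝕜) }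
  -- Cramer's rule: replacing row `i` of `M t` by that of `M'` gives a diagonal entry of
  -- `M' * adjugate (M t)`, and the derivative of the multilinear `det` sums these over `i`.
  have hrow (i : ι) : ((M t).updateRow i (M'.row i)).det = (M' * (M t).adjugate) i i := by
    rw [← cramer_transpose_apply, cramer_eq_adjugate_mulVec, ← adjugate_transpose, mulVec_transpose]
    rfl
  refine ((det'.hasFDerivAt (M t)).comp_hasDerivAt t hM).congr_deriv ?_
  rw [trace_mul_comm]
  exact (det'.linearDeriv_apply (M t) M').trans (Finset.sum_congr rfl fun i _ => hrow i)

theorem hasDerivAt_det_rpow {M : ℝ → Matrix ι ι ℝ} {M' : Matrix ι ι ℝ} {t : ℝ}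
    (hM : HasDerivAt M M' t) (ht : 0 < (M t).det) (p : ℝ) :
    HasDerivAt (fun s => (M s).det ^ p) (p * (M t).det ^ p * ((M t)⁻¹ * M').trace) t := by
  have hadj : ((M t).adjugate * M').trace = (M t).det * ((M t)⁻¹ * M').trace := by
    rw [inv_def, smul_mul, trace_smul, smul_eq_mul, Ring.inverse_eq_inv',
      mul_inv_cancel_left₀ ht.ne']
  refine ((hasDerivAt_det hM).rpow_const (.inl ht.ne')).congr_deriv ?_
  rw [hadj, Real.rpow_sub_one ht.ne']
  field_simp

end MatrixCalculus

theorem trace_transpose_mul_of_isSymm {ι R : Type*} [Fintype ι] [AddCommMonoid R] [Mul R]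
    {H : Matrix ι ι R} (hH : H.IsSymm) (K : Matrix ι ι R) :
    (Kᵀ * H).trace = (K * H).trace := by
  rw [← trace_transpose_mul K H, hH]

section PartialDerivatives

variable {d : ℕ} {f g : (Fin d → ℝ) → ℝ} {x : Fin d → ℝ}

theorem pd_mul (hf : DifferentiableAt ℝ f x) (hg : DifferentiableAt ℝ g x) (i : Fin d) :
    pd i (fun y => f y * g y) x = f x * pd i g x + pd i f x * g x := by
  simp [pd, fderiv_fun_mul hf hg, mul_comm]

theorem pd_mulVec_apply {m : Type*} (L : Matrix m (Fin d) ℝ) (i : Fin d) (j : m)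
    (x : Fin d → ℝ) :
    pd i (fun y => (L *ᵥ y) j) x = L j i := by
  rw [pd, (hasFDerivAt_mulVec_apply L j x).fderiv]
  simp

theorem dvg_mulVec_grad (hf : ∀ j, DifferentiableAt ℝ (pd j f) x)
    (K : Matrix (Fin d) (Fin d) ℝ) :
    dvg (fun y => K *ᵥ grad f y) x = (K * (hess f x)ᵀ).trace := by
  have hpd (i : Fin d) : pd i (fun y => (K *ᵥ grad f y) i) x = ∑ j, K i j * pd i (pd j f) x := by
    have hsum := HasFDerivAt.fun_sum fun j (_ : j ∈ Finset.univ) =>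
      (hf j).hasFDerivAt.const_mul (K i j)
    exact (congrArg (· (Pi.single i 1)) hsum.fderiv).trans (sum_apply _ _ _)
  exact Finset.sum_congr rfl fun i _ => hpd i

end PartialDerivatives

section Gaussian

variable {d : ℕ} {S : Matrix (Fin d) (Fin d) ℝ}

/-- The density at `z` of the centred Gaussian law with covariance matrix `S`, when `S` is positive
definite. -/
noncomputable def gaussianDensity (S : Matrix (Fin d) (Fin d) ℝ) (z : Fin d → ℝ) : ℝ :=
  (2 * Real.pi) ^ (-(d : ℝ) / 2) * S.det ^ (-(1 : ℝ) / 2) *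
    Real.exp (-(1 / 2) * (z ⬝ᵥ S⁻¹ *ᵥ z))

theorem hasFDerivAt_gaussianDensity (hS : S.IsSymm) (z : Fin d → ℝ) :
    HasFDerivAt (gaussianDensity S)
      (-gaussianDensity S z • (dotProductBilin ℝ ℝ (S⁻¹ *ᵥ z)).toContinuousLinearMap) z := by
  refine (((hasFDerivAt_dotProduct_mulVec_self S⁻¹ z).const_mul
    (-(1 / 2))).exp.const_mul _).congr_fderiv ?_
  ext v
  simp only [gaussianDensity, hS.inv.eq, add_mulVec, map_add, smul_add, _root_.add_apply,
    _root_.smul_apply, LinearMap.coe_toContinuousLinearMap', dotProductBilin_apply_apply,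
    smul_eq_mul]
  ring

theorem pd_gaussianDensity (hS : S.IsSymm) (i : Fin d) :
    pd i (gaussianDensity S) = fun z => gaussianDensity S z * (-S⁻¹ *ᵥ z) i := by
  ext z
  rw [pd, (hasFDerivAt_gaussianDensity hS z).fderiv]
  simp [neg_mulVec]

theorem grad_gaussianDensity (hS : S.IsSymm) (z : Fin d → ℝ) :
    grad (gaussianDensity S) z = gaussianDensity S z • -S⁻¹ *ᵥ z := by
  ext i
  simp [grad, pd_gaussianDensity hS]

theorem differentiableAt_pd_gaussianDensity (hS : S.IsSymm) (i : Fin d) (z : Fin d → ℝ) :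
    DifferentiableAt ℝ (pd i (gaussianDensity S)) z := by
  rw [pd_gaussianDensity hS]
  exact (hasFDerivAt_gaussianDensity hS z).differentiableAt.fun_mul
    (hasFDerivAt_mulVec_apply (-S⁻¹) i z).differentiableAt

theorem hess_gaussianDensity (hS : S.IsSymm) (z : Fin d → ℝ) :
    hess (gaussianDensity S) z =
      gaussianDensity S z • (vecMulVec (S⁻¹ *ᵥ z) (S⁻¹ *ᵥ z) - S⁻¹) := by
  ext i j
  simp only [hess, of_apply, pd_gaussianDensity hS]
  rw [pd_mul (hasFDerivAt_gaussianDensity hS z).differentiableAt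
    (hasFDerivAt_mulVec_apply (-S⁻¹) j z).differentiableAt, pd_mulVec_apply, pd_gaussianDensity hS]
  simp only [Matrix.neg_apply, Pi.neg_apply, Matrix.smul_apply, Matrix.sub_apply, vecMulVec_apply,
    neg_mulVec, hS.inv.apply i j, smul_eq_mul]
  ring

theorem isSymm_hess_gaussianDensity (hS : S.IsSymm) (z : Fin d → ℝ) :
    (hess (gaussianDensity S) z).IsSymm := by
  rw [hess_gaussianDensity hS]
  exact (IsSymm.sub (transpose_vecMulVec _ _) hS.inv).smul _

theorem dvg_gaussianDensity_smul_mulVec (hS : S.IsSymm) (hdet : IsUnit S.det)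
    (L : Matrix (Fin d) (Fin d) ℝ) (z : Fin d → ℝ) :
    dvg (fun y => gaussianDensity S y • L *ᵥ y) z =
      -(L * S * hess (gaussianDensity S) z).trace := by
  have hflux (y : Fin d → ℝ) :
      gaussianDensity S y • L *ᵥ y = (-(L * S)) *ᵥ grad (gaussianDensity S) y := by
    rw [grad_gaussianDensity hS, mulVec_smul, mulVec_mulVec, neg_mul_neg,
      mul_nonsing_inv_cancel_right _ _ hdet]
  simp_rw [hflux]
  rw [dvg_mulVec_grad fun j => differentiableAt_pd_gaussianDensity hS j z,
    (isSymm_hess_gaussianDensity hS z).eq, neg_mul, trace_neg]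

theorem trace_mul_hess_gaussianDensity (hS : S.IsSymm) (K : Matrix (Fin d) (Fin d) ℝ)
    (z : Fin d → ℝ) :
    (K * hess (gaussianDensity S) z).trace =
      gaussianDensity S z * (z ⬝ᵥ (S⁻¹ * K * S⁻¹) *ᵥ z - (S⁻¹ * K).trace) := by
  have hform : z ⬝ᵥ (S⁻¹ * K * S⁻¹) *ᵥ z = (K *ᵥ S⁻¹ *ᵥ z) ⬝ᵥ (S⁻¹ *ᵥ z) := by
    rw [← mulVec_mulVec, ← mulVec_mulVec, ← hS.inv.eq, dotProduct_transpose_mulVec, hS.inv.eq]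
  rw [hess_gaussianDensity hS, hform, Matrix.mul_smul, trace_smul, mul_sub, trace_sub,
    mul_vecMulVec, trace_vecMulVec, trace_mul_comm, smul_eq_mul]

theorem hasDerivAt_gaussianDensity {S : ℝ → Matrix (Fin d) (Fin d) ℝ}
    {S' : Matrix (Fin d) (Fin d) ℝ} {t : ℝ} (hS : HasDerivAt S S' t) (hsymm : (S t).IsSymm)
    (hdet : 0 < (S t).det) (z : Fin d → ℝ) :
    HasDerivAt (fun s => gaussianDensity (S s) z)
      ((1 / 2) * (S' * hess (gaussianDensity (S t)) z).trace) t := by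
  have hunit : IsUnit (S t) := (isUnit_iff_isUnit_det _).2 hdet.ne'.isUnit
  have hpow := (hasDerivAt_det_rpow hS hdet (-1 / 2)).const_mul ((2 * Real.pi) ^ (-(d : ℝ) / 2))
  have hexp := ((hasDerivAt_dotProduct_mulVec (hasDerivAt_matrix_inv hS hunit) z z).const_mul
    (-(1 / 2))).exp
  refine (hpow.mul hexp).congr_deriv ?_
  rw [trace_mul_hess_gaussianDensity hsymm, gaussianDensity, neg_mulVec, dotProduct_neg]
  ring

end Gaussian

/-- `W`, `Q` and `D` stand for `CᵀC`, `B R⁻¹ Bᵀ` and `σσᵀ`. -/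
theorem lqg_mean_field_fokker_planck_general {d : ℕ} {A W Q : Matrix (Fin d) (Fin d) ℝ}
    {S : ℝ → Matrix (Fin d) (Fin d) ℝ} {t : ℝ} (hsymm : (S t).IsSymm) (hdet : 0 < (S t).det)
    (hS : HasDerivAt S (A * S t + S t * Aᵀ + S t * W * S t - Q) t)
    (D : Matrix (Fin d) (Fin d) ℝ) (z : Fin d → ℝ) :
    HasDerivAt (fun s => gaussianDensity (S s) z)
      (-(dvg (fun y => gaussianDensity (S t) y •
            (A *ᵥ y + (1 / 2 : ℝ) • (S t * W) *ᵥ y + (1 / 2 : ℝ) • (D * (S t)⁻¹) *ᵥ y)) z)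
        - (1 / 2) * ((Q + D) * hess (gaussianDensity (S t)) z).trace) t := by
  have hunit : IsUnit (S t).det := hdet.ne'.isUnit
  have hdrift (y : Fin d → ℝ) :
      A *ᵥ y + (1 / 2 : ℝ) • (S t * W) *ᵥ y + (1 / 2 : ℝ) • (D * (S t)⁻¹) *ᵥ y =
        (A + (1 / 2 : ℝ) • (S t * W) + (1 / 2 : ℝ) • (D * (S t)⁻¹)) *ᵥ y := by
    simp only [add_mulVec, smul_mulVec]
  have hdiffusion : D * (S t)⁻¹ * S t = D := nonsing_inv_mul_cancel_right _ _ hunit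
  have hadjoint := trace_transpose_mul_of_isSymm (isSymm_hess_gaussianDensity hsymm z) (A * S t)
  rw [transpose_mul, hsymm.eq] at hadjoint
  refine (hasDerivAt_gaussianDensity hS hsymm hdet z).congr_deriv ?_
  simp_rw [hdrift]
  rw [dvg_gaussianDensity_smul_mulVec hsymm hunit]
  simp only [add_mul, sub_mul, smul_mul, trace_add, trace_sub, trace_smul, hdiffusion, hadjoint,
    smul_eq_mul]
  ring

/-- Fokker-Planck equation of the dual-EnKF mean-field process in the LQG
case: the Gaussian density `ρ(t,·) = N(0, S_t)` driven by the dual Riccati equation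
satisfies the stated PDE with drift `Az`, interaction `½ S_t CᵀC z` and correction
`½ σσᵀ S_t⁻¹ z`. -/
theorem lqg_mean_field_fokker_planck
    (d m k n : ℕ) (T : ℝ) (hT : 0 < T)
    (A : Matrix (Fin d) (Fin d) ℝ) (B : Matrix (Fin d) (Fin m) ℝ)
    (C : Matrix (Fin k) (Fin d) ℝ) (σ : Matrix (Fin d) (Fin n) ℝ)
    (R : Matrix (Fin m) (Fin m) ℝ) (hR : R.PosDef)
    (S S' : ℝ → Matrix (Fin d) (Fin d) ℝ)
    (hSpd : ∀ t ∈ Set.Icc (0 : ℝ) T, (S t).PosDef)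
    (hS : ∀ t ∈ Set.Icc (0 : ℝ) T, ∀ i j, HasDerivAt (fun s => S s i j) (S' t i j) t)
    (hS'cont : ∀ i j, ContinuousOn (fun t => S' t i j) (Set.Icc (0 : ℝ) T))
    (hric : ∀ t ∈ Set.Icc (0 : ℝ) T,
      S' t = A * S t + S t * Aᵀ + S t * (Cᵀ * C) * S t - B * R⁻¹ * Bᵀ)
    (ρ : ℝ → (Fin d → ℝ) → ℝ)
    (hρ : ∀ t z, ρ t z =
      (2 * Real.pi) ^ (-(d : ℝ) / 2) * (S t).det ^ (-(1 : ℝ) / 2) *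
        Real.exp (-(1 / 2) * (z ⬝ᵥ (S t)⁻¹.mulVec z))) :
    ∀ t ∈ Set.Icc (0 : ℝ) T, ∀ z,
      deriv (fun s => ρ s z) t =
        -(dvg (fun y => ρ t y •
            (A.mulVec y + (1 / 2 : ℝ) • ((S t * (Cᵀ * C)).mulVec y)
              + (1 / 2 : ℝ) • ((σ * σᵀ * (S t)⁻¹).mulVec y))) z)
        - (1 / 2) * ((B * R⁻¹ * Bᵀ + σ * σᵀ) * hess (ρ t) z).trace := by
  intro t ht z
  obtain rfl : ρ = fun s => gaussianDensity (S s) := funext₂ hρ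
  have hSt := hasDerivAt_matrix.2 (hS t ht)
  rw [hric t ht] at hSt
  exact (lqg_mean_field_fokker_planck_general
    (isHermitian_iff_isSymm.1 (hSpd t ht).isHermitian) (hSpd t ht).det_pos hSt (σ * σᵀ) z).deriv
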